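/- arXiv:1309.5828 — 8 statements merged into one kernel-verified Lean document; each statement's English description precedes it below -/
import Mathlib

section
/- For all real α, β, x with β not a nonpositive integer, Kummer's transformation holds: φ(α, β, x) = e^x · φ(β − α, β, −x). -/
/-!
Multiplying the series of `exp x` by that of `φ(β - α, β, -x)` with the Cauchy product, the
coefficient of `x ^ n / n!` is `∑ k ≤ n, C(n, k) (-1) ^ k (β - α)_k / (β)_k`. The Chu–Vandermonde
identity (`chu_vandermonde`) evaluates it as `(α)_n / (β)_n`. That identity follows by induction on
`n` from Pascal's rule, which relates the sum at `(n + 1, c, β)` to those at `(n, c, β)` and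
`(n, c + 1, β + 1)`. The ratio test (`summable_kummer`) gives the absolute convergence needed for
the Cauchy product.
-/

open scoped Nat

/-- Kummer's confluent hypergeometric series φ(α,β,x) = ∑ (α)ₙ/(β)ₙ · xⁿ/n!. -/
noncomputable def kummerPhi (α β x : ℝ) : ℝ :=
  ∑' n : ℕ, ((ascPochhammer ℝ n).eval α / (ascPochhammer ℝ n).eval β) * x ^ n / (n ! : ℝ)

open Filter Topology Finset

theorem eval_asc_ne_zero (β : ℝ) (hβ : ∀ k : ℕ, β ≠ -(k : ℝ)) (n : ℕ) :
    (ascPochhammer ℝ n).eval β ≠ 0 := by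
  induction n with
  | zero => simp
  | succ n ih =>
    rw [ascPochhammer_succ_eval]
    exact mul_ne_zero ih fun h => hβ n (by linarith)

theorem eval_asc_succ_left (a : ℝ) (n : ℕ) :
    (ascPochhammer ℝ (n + 1)).eval a = a * (ascPochhammer ℝ n).eval (a + 1) := by
  rw [ascPochhammer_succ_left]; simp [Polynomial.eval_comp]

/-- The Chu–Vandermonde identity `₂F₁(-n, c; β; 1) = (β - c)_n / (β)_n`. -/
theorem chu_vandermonde (n : ℕ) : ∀ (c β : ℝ), (∀ k : ℕ, β ≠ -(k : ℝ)) →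
    ∑ k ∈ range (n + 1), (n.choose k : ℝ) *
      ((-1) ^ k * ((ascPochhammer ℝ k).eval c / (ascPochhammer ℝ k).eval β)) =
      (ascPochhammer ℝ n).eval (β - c) / (ascPochhammer ℝ n).eval β := by
  induction n with
  | zero => intro c β _; simp
  | succ n ih =>
    intro c β hβ
    have hβ1 : ∀ k : ℕ, β + 1 ≠ -(k : ℝ) := fun k h => hβ (k + 1) (by push_cast; linarith)
    have hb : β ≠ 0 := by simpa using hβ 0
    have hbn : β + n ≠ 0 := fun h => hβ n (by linarith)
    have key := Finset.sum_choose_succ_mul (R := ℝ) (fun k _ => (-1) ^ k *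
      ((ascPochhammer ℝ k).eval c / (ascPochhammer ℝ k).eval β)) n
    have shift : ∑ k ∈ range (n + 1), (n.choose k : ℝ) *
        ((-1) ^ (k + 1) *
          ((ascPochhammer ℝ (k + 1)).eval c / (ascPochhammer ℝ (k + 1)).eval β)) =
        -(c / β) * ((ascPochhammer ℝ n).eval (β - c) / (ascPochhammer ℝ n).eval (β + 1)) := by
      have h := ih (c + 1) (β + 1) hβ1
      rw [show β + 1 - (c + 1) = β - c by ring] at h
      rw [← h, mul_sum]
      refine sum_congr rfl fun k _ => ?_
      rw [eval_asc_succ_left, eval_asc_succ_left, mul_div_mul_comm]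
      ring
    have h0 := eval_asc_ne_zero β hβ n
    have h1 := eval_asc_ne_zero (β + 1) hβ1 n
    -- The two factorizations of `(β)_{n+1}` bring both Pascal terms to one denominator.
    have e : β * (ascPochhammer ℝ n).eval (β + 1) = (ascPochhammer ℝ n).eval β * (β + n) := by
      rw [← eval_asc_succ_left, ascPochhammer_succ_eval]
    have e1 : (ascPochhammer ℝ n).eval (β + 1) = (ascPochhammer ℝ n).eval β * (β + n) / β := by
      field_simp; linarith
    refine key.trans ?_
    rw [ih c β hβ, shift, ascPochhammer_succ_eval, ascPochhammer_succ_eval, e1]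
    field_simp
    ring

theorem summable_kummer (α β x : ℝ) : Summable fun n : ℕ =>
    ((ascPochhammer ℝ n).eval α / (ascPochhammer ℝ n).eval β) * x ^ n / (n ! : ℝ) := by
  have ha : ∀ a : ℝ, Tendsto (fun n : ℕ => a + (n : ℝ)) atTop atTop := fun a =>
    tendsto_atTop_add_const_left _ a tendsto_natCast_atTop_atTop
  have hlim : Tendsto (fun n : ℕ => (1 + (α - β) / (β + n)) * (x / (1 + n))) atTop (𝓝 0) := by
    simpa using (((ha β).const_div_atTop (α - β)).const_add 1).mul ((ha 1).const_div_atTop x)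
  have hnorm : Tendsto (fun n : ℕ => ‖(1 + (α - β) / (β + n)) * (x / (1 + n))‖) atTop (𝓝 0) := by
    simpa using hlim.norm
  refine summable_of_ratio_norm_eventually_le (r := 1 / 2) (by norm_num) ?_
  filter_upwards [hnorm.eventually_le_const (show (0 : ℝ) < 1 / 2 by norm_num),
    (ha β).eventually_gt_atTop 0] with n hn hpos
  refine le_trans (le_of_eq ?_) (mul_le_mul_of_nonneg_right hn (norm_nonneg _))
  rw [← norm_mul]
  congr 1
  have hn1 : (1 + (n : ℝ)) ≠ 0 := by positivity
  rw [ascPochhammer_succ_eval, ascPochhammer_succ_eval, mul_div_mul_comm, Nat.factorial_succ,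
    show (α + n) / (β + n) = 1 + (α - β) / (β + n) by field_simp; ring]
  push_cast
  rw [add_comm (n : ℝ) 1, pow_succ]
  field_simp

/-- Kummer's transformation φ(α,β,x) = eˣ · φ(β−α,β,−x). -/
theorem kummer_transformation (α β x : ℝ) (hβ : ∀ k : ℕ, β ≠ -(k : ℝ)) :
    kummerPhi α β x = Real.exp x * kummerPhi (β - α) β (-x) := by
  have hexp : Real.exp x = ∑' n : ℕ, x ^ n / (n ! : ℝ) := by
    rw [Real.exp_eq_exp_ℝ, NormedSpace.exp_eq_tsum_div]
  unfold kummerPhi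
  rw [hexp, mul_comm, tsum_mul_tsum_eq_tsum_sum_range_of_summable_norm
    (summable_kummer (β - α) β (-x)).norm (Real.summable_pow_div_factorial x).norm]
  refine tsum_congr fun n => ?_
  have h := chu_vandermonde n (β - α) β hβ
  rw [sub_sub_cancel] at h
  rw [← h, sum_mul, sum_div]
  refine sum_congr rfl fun k hk => ?_
  have hkn : k ≤ n := Nat.lt_succ_iff.mp (mem_range.mp hk)
  rw [Nat.cast_choose ℝ hkn, neg_pow x k, show x ^ n = x ^ k * x ^ (n - k) by rw [← pow_add, Nat.add_sub_cancel' hkn]]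
  field_simp
end

section
/- For all real α and x such that 2α is not a nonpositive integer, φ(α, 2α, x) = e^{x/2} · ψ(α + 1/2, x²/16). -/
/-!
Compare Taylor coefficients. Put `P = ∑ x ^ (2k) / (16 ^ k (α + 1/2)_k k!)` and `E = ∑ (x/2)^n / n!`
as formal power series. The coefficient recurrence of `P` says `x P'' + 2α P' = x P / 4`, and
`E' = E / 2`, so the product `f = E P` solves Kummer's equation `x f'' + (2α - x) f' = α f`
(`kummer_ode`). Since no `n + 2α` vanishes, that equation determines the coefficients of `f` from
`f(0) = 1`, and they are those of `φ(α, 2α, x)` (`coeff_expSeries_mul_psiSeries`). The series `E` and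
`P` converge absolutely at every real `x`, so their Cauchy product gives the identity of sums.
-/

open scoped Nat

/-- The series ψ(α,x) = ∑ xⁿ/((α)ₙ · n!). -/
noncomputable def kummerPsi (α x : ℝ) : ℝ :=
  ∑' n : ℕ, x ^ n / ((ascPochhammer ℝ n).eval α * (n ! : ℝ))

/-- The Taylor series of `exp (x / 2)`. -/
noncomputable def expSeries : PowerSeries ℝ := PowerSeries.mk fun n => (1 / 2) ^ n / (n ! : ℝ)

/-- The Taylor series of `ψ(c, x ^ 2 / 16)` in the variable `x`; only even degrees occur. -/
noncomputable def psiSeries (c : ℝ) : PowerSeries ℝ := PowerSeries.mk fun n =>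
  if Even n then
    1 / (16 ^ (n / 2) * ((ascPochhammer ℝ (n / 2)).eval c * ((n / 2) ! : ℝ)))
  else 0

lemma coeff_psiSeries_two_mul (c : ℝ) (k : ℕ) : PowerSeries.coeff (2 * k) (psiSeries c) =
    1 / (16 ^ k * ((ascPochhammer ℝ k).eval c * (k ! : ℝ))) := by
  simp [psiSeries]

lemma coeff_psiSeries_odd (c : ℝ) (k : ℕ) :
    PowerSeries.coeff (2 * k + 1) (psiSeries c) = 0 := by
  simp [psiSeries]

/-- The coefficientwise form of `x P'' + 2α P' = x P / 4`. -/
lemma coeff_psiSeries_add_two (α : ℝ) (hα : ∀ k : ℕ, 2 * α ≠ -(k : ℝ)) (n : ℕ) :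
    (n + 2) * (n + 1 + 2 * α) * PowerSeries.coeff (n + 2) (psiSeries (α + 1 / 2)) =
      PowerSeries.coeff n (psiSeries (α + 1 / 2)) / 4 := by
  rcases Nat.even_or_odd' n with ⟨k, rfl | rfl⟩
  · rw [show 2 * k + 2 = 2 * (k + 1) by ring, coeff_psiSeries_two_mul, coeff_psiSeries_two_mul,
      ascPochhammer_succ_eval, Nat.factorial_succ]
    have h1 : α + 1 / 2 + k ≠ 0 := fun h => hα (2 * k + 1) (by push_cast; linarith)
    have h2 : (k : ℝ) + 1 ≠ 0 := by positivity
    push_cast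
    rw [show (2 * (k : ℝ) + 2) * (2 * k + 1 + 2 * α) = 4 * ((α + 1 / 2 + k) * (k + 1)) by ring,
      show (16 : ℝ) ^ (k + 1) * ((ascPochhammer ℝ k).eval (α + 1 / 2) * (α + 1 / 2 + k) *
        ((k + 1) * (k ! : ℝ))) = ((α + 1 / 2 + k) * (k + 1)) * 16 *
        (16 ^ k * ((ascPochhammer ℝ k).eval (α + 1 / 2) * (k ! : ℝ))) by ring]
    generalize (16 : ℝ) ^ k * ((ascPochhammer ℝ k).eval (α + 1 / 2) * (k ! : ℝ)) = q
    have h3 := mul_ne_zero h1 h2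
    generalize (α + 1 / 2 + k) * ((k : ℝ) + 1) = r at *
    rw [one_div, one_div, mul_inv, mul_inv]
    field_simp
    norm_num
  · rw [show 2 * k + 1 + 2 = 2 * (k + 1) + 1 by ring, coeff_psiSeries_odd, coeff_psiSeries_odd]
    simp

open PowerSeries in
lemma psiSeries_ode (α : ℝ) (hα : ∀ k : ℕ, 2 * α ≠ -(k : ℝ)) :
    X * d⁄dX ℝ (d⁄dX ℝ (psiSeries (α + 1 / 2))) + C (2 * α) * d⁄dX ℝ (psiSeries (α + 1 / 2)) =
      C (1 / 4) * (X * psiSeries (α + 1 / 2)) := by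
  ext n
  cases n with
  | zero =>
    have := coeff_psiSeries_odd (α + 1 / 2) 0
    simp only [mul_zero, zero_add] at this
    simp only [map_add, coeff_zero_X_mul, coeff_C_mul, coeff_derivative, zero_add, this]
    simp
  | succ n =>
    have := coeff_psiSeries_add_two α hα n
    simp only [map_add, coeff_succ_X_mul, coeff_C_mul, coeff_derivative]
    push_cast
    linear_combination this

open PowerSeries in
lemma derivative_expSeries : d⁄dX ℝ expSeries = C (1 / 2) * expSeries := by
  ext n
  simp only [expSeries, coeff_C_mul, coeff_derivative, coeff_mk, Nat.factorial_succ]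
  push_cast
  have : (n : ℝ) + 1 ≠ 0 := by positivity
  field_simp
  ring

open PowerSeries in
/-- `exp (x / 2) * ψ(α + 1/2, x ^ 2 / 16)` formally solves Kummer's equation with `β = 2α`. -/
lemma kummer_ode (α : ℝ) (hα : ∀ k : ℕ, 2 * α ≠ -(k : ℝ)) :
    let f := expSeries * psiSeries (α + 1 / 2)
    X * d⁄dX ℝ (d⁄dX ℝ f) + C (2 * α) * d⁄dX ℝ f = X * d⁄dX ℝ f + C α * f := by
  intro f
  have h := psiSeries_ode α hα
  have c1 : (C (1 / 4) : PowerSeries ℝ) = C (1 / 2) * C (1 / 2) := by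
    rw [← map_mul]; norm_num
  have c2 : (C (2 * α) : PowerSeries ℝ) * C (1 / 2) = C α := by
    rw [← map_mul]; congr 1; ring
  have c3 : (C (1 / 2) : PowerSeries ℝ) + C (1 / 2) = 1 := by
    rw [← map_add, ← map_one (C (R := ℝ))]; norm_num
  have hC : d⁄dX ℝ (C (1 / 2) : PowerSeries ℝ) = 0 := derivative_C ..
  have hf : d⁄dX ℝ f = expSeries * d⁄dX ℝ (psiSeries (α + 1 / 2)) + C (1 / 2) * f := by
    simp only [f, Derivation.leibniz, smul_eq_mul, derivative_expSeries]; ring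
  have hf2 : d⁄dX ℝ (d⁄dX ℝ f) = expSeries * d⁄dX ℝ (d⁄dX ℝ (psiSeries (α + 1 / 2))) +
      C (1 / 2) * (expSeries * d⁄dX ℝ (psiSeries (α + 1 / 2))) + C (1 / 2) * d⁄dX ℝ f := by
    conv_lhs => rw [hf]
    simp only [map_add, Derivation.leibniz, smul_eq_mul, derivative_expSeries, hC]; ring
  rw [hf2, hf]
  rw [c1] at h
  simp only [f]
  generalize (C (1 / 2) : PowerSeries ℝ) = u at *
  generalize d⁄dX ℝ (d⁄dX ℝ (psiSeries (α + 1 / 2))) = P2 at *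
  generalize d⁄dX ℝ (psiSeries (α + 1 / 2)) = P1 at *
  generalize psiSeries (α + 1 / 2) = P at *
  linear_combination expSeries * h + expSeries * P * c2 +
    (X * expSeries * P1 + u * X * expSeries * P) * c3

lemma coeff_expSeries_mul_psiSeries (α : ℝ) (hα : ∀ k : ℕ, 2 * α ≠ -(k : ℝ)) (n : ℕ) :
    PowerSeries.coeff n (expSeries * psiSeries (α + 1 / 2)) =
      (ascPochhammer ℝ n).eval α / (ascPochhammer ℝ n).eval (2 * α) / (n ! : ℝ) := by
  induction n with
  | zero => simp [PowerSeries.coeff_mul, expSeries, psiSeries]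
  | succ n ih =>
    have h1 : 2 * α + n ≠ 0 := fun h => hα n (by linarith)
    have h2 : (n : ℝ) + 1 ≠ 0 := by positivity
    -- the coefficient of `x ^ n` in Kummer's equation
    have key : (2 * α + n) * (n + 1) *
        PowerSeries.coeff (n + 1) (expSeries * psiSeries (α + 1 / 2)) =
        (α + n) * PowerSeries.coeff n (expSeries * psiSeries (α + 1 / 2)) := by
      have h := congrArg (PowerSeries.coeff n) (kummer_ode α hα)
      cases n with
      | zero =>
        simp only [map_add, PowerSeries.coeff_zero_X_mul, PowerSeries.coeff_C_mul,
          PowerSeries.coeff_derivative] at h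
        push_cast at h ⊢
        linear_combination h
      | succ m =>
        simp only [map_add, PowerSeries.coeff_succ_X_mul, PowerSeries.coeff_C_mul,
          PowerSeries.coeff_derivative] at h
        push_cast at h ⊢
        linear_combination h
    apply mul_left_cancel₀ (mul_ne_zero h1 h2)
    rw [key, ih, ascPochhammer_succ_eval, ascPochhammer_succ_eval, Nat.factorial_succ]
    push_cast
    generalize (ascPochhammer ℝ n).eval (2 * α) = q
    generalize 2 * α + (n : ℝ) = r at *
    simp only [div_eq_mul_inv, mul_inv]
    field_simp

/-- The terms of `ψ(c, y)` are absolutely summable for all real `c`, with the convention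
`1 / 0 = 0` when `c` is a nonpositive integer. -/
lemma summable_norm_psi (c y : ℝ) :
    Summable fun n : ℕ => ‖y ^ n / ((ascPochhammer ℝ n).eval c * (n ! : ℝ))‖ := by
  have hs : ∀ n : ℕ, y ^ (n + 1) / ((ascPochhammer ℝ (n + 1)).eval c * ((n + 1) ! : ℝ)) =
      (y / (n + 1) * (c + n)⁻¹) * (y ^ n / ((ascPochhammer ℝ n).eval c * (n ! : ℝ))) := by
    intro n
    rw [ascPochhammer_succ_eval, Nat.factorial_succ]
    push_cast
    simp only [div_eq_mul_inv, mul_inv, pow_succ]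
    ring
  have ht : Filter.Tendsto (fun n : ℕ => ‖y / (n + 1) * (c + n)⁻¹‖) Filter.atTop (nhds 0) := by
    have a : Filter.Tendsto (fun n : ℕ => y / ((n : ℝ) + 1)) Filter.atTop (nhds 0) :=
      tendsto_const_nhds.div_atTop
        (Filter.tendsto_atTop_add_const_right _ _ tendsto_natCast_atTop_atTop)
    have b : Filter.Tendsto (fun n : ℕ => (c + (n : ℝ))⁻¹) Filter.atTop (nhds 0) :=
      (Filter.tendsto_atTop_add_const_left _ _ tendsto_natCast_atTop_atTop).inv_tendsto_atTop
    simpa using (a.mul b).norm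
  refine summable_of_ratio_norm_eventually_le (r := 1 / 2) (by norm_num) ?_
  filter_upwards [ht.eventually_le_const (show (0 : ℝ) < 1 / 2 by norm_num)] with n hn
  rw [norm_norm, norm_norm, hs, norm_mul]
  gcongr

/-- φ(α, 2α, x) = e^{x/2} · ψ(α + 1/2, x²/16). -/
theorem kummer_phi_eq_psi (α x : ℝ) (hα : ∀ k : ℕ, 2 * α ≠ -(k : ℝ)) :
    kummerPhi α (2 * α) x = Real.exp (x / 2) * kummerPsi (α + 1 / 2) (x ^ 2 / 16) := by
  set p : ℕ → ℝ := fun n => PowerSeries.coeff n (psiSeries (α + 1 / 2)) * x ^ n with hp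
  set e : ℕ → ℝ := fun n => PowerSeries.coeff n expSeries * x ^ n with he
  have he' : e = fun n : ℕ => (x / 2) ^ n / (n ! : ℝ) := by
    funext n
    simp only [he, expSeries, PowerSeries.coeff_mk, div_pow, one_pow]
    ring
  have hinj : Function.Injective fun k : ℕ => 2 * k := fun a b h => by simpa using h
  have hp0 : ∀ n ∉ Set.range (fun k : ℕ => 2 * k), p n = 0 := by
    intro n hn
    rcases Nat.even_or_odd' n with ⟨k, rfl | rfl⟩
    · exact absurd ⟨k, rfl⟩ hn
    · simp only [hp, coeff_psiSeries_odd, zero_mul]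
  have hpk : ∀ k : ℕ, p (2 * k) =
      (x ^ 2 / 16) ^ k / ((ascPochhammer ℝ k).eval (α + 1 / 2) * (k ! : ℝ)) := by
    intro k
    simp only [hp, coeff_psiSeries_two_mul, div_pow, ← pow_mul]
    simp only [div_eq_mul_inv, mul_inv]
    ring
  have hpsum : Summable fun n => ‖p n‖ := by
    refine (hinj.summable_iff fun n hn => by rw [hp0 n hn, norm_zero]).1 ?_
    simpa only [Function.comp_def, hpk] using summable_norm_psi (α + 1 / 2) (x ^ 2 / 16)
  have hesum : Summable fun n => ‖e n‖ := by
    rw [he']; exact (Real.summable_pow_div_factorial (x / 2)).norm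
  have hpt : ∑' n, p n = kummerPsi (α + 1 / 2) (x ^ 2 / 16) := by
    rw [kummerPsi, ← hinj.tsum_eq (fun n hn => by_contra fun h => hn (hp0 n h))]
    exact tsum_congr hpk
  have het : ∑' n, e n = Real.exp (x / 2) := by
    rw [he', Real.exp_eq_exp_ℝ, NormedSpace.exp_eq_tsum_div]
  rw [← hpt, ← het, tsum_mul_tsum_eq_tsum_sum_antidiagonal_of_summable_norm hesum hpsum, kummerPhi]
  refine tsum_congr fun n => ?_
  have h := coeff_expSeries_mul_psiSeries α hα n
  rw [PowerSeries.coeff_mul] at h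
  rw [mul_div_right_comm, ← h, Finset.sum_mul]
  refine Finset.sum_congr rfl fun ij hij => ?_
  rw [← Finset.HasAntidiagonal.mem_antidiagonal.1 hij, pow_add]
  simp only [he, hp]
  ring
end

section
/- Let α be a real number and define y(x) = ∫₀^∞ u^{α−1} e^{−u} e^{−x/u} du for x > 0. Then y is twice differentiable on (0,∞) and satisfies the differential equation y(x) + (α − 1)·y′(x) − x·y″(x) = 0 for every x > 0. -/
open MeasureTheory

/-!
Write `K a x u = u ^ a * exp (-u) * exp (-(x / u))`, so that `y x = ∫ u in Ioi 0, K (α - 1) x u`.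
Since `exp t ≥ t ^ n / n!`, the kernel is dominated by `(n! / x ^ n) * u ^ (a + n) * exp (-u)` for
every `n`; with `n` large this gives integrability for every real exponent `a`, and vanishing of
`K a x` at both `0` and `∞`. Differentiating in `x` multiplies the kernel by `-u⁻¹`, and `K a x`
decreases in `x`, so `K (a - 1) (x / 2)` dominates near `x` and
`d/dx ∫ K a x = -∫ K (a - 1) x`. Hence `y' = -∫ K (α - 2)` and `y'' = ∫ K (α - 3)`. Finally
`∂/∂u K a x = a * K (a - 1) x - K a x + x * K (a - 2) x` integrates to `0`, which for `a = α - 1` is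
the differential equation.
-/

namespace KummerIntegral

open Set Filter Topology

/-- The integrand `u ^ a * exp (-u) * exp (-(x / u))`, with arbitrary real exponent `a`. -/
noncomputable def K (a x u : ℝ) : ℝ := u ^ a * Real.exp (-u) * Real.exp (-(x / u))

lemma K_nonneg (a x : ℝ) {u : ℝ} (hu : 0 < u) : 0 ≤ K a x u := by
  unfold K; positivity

/-- The factor `exp (-(x / u))` gains any power of `u` near `0`. -/
lemma K_le (a : ℝ) {x u : ℝ} (hx : 0 < x) (hu : 0 < u) (n : ℕ) :
    K a x u ≤ (n.factorial / x ^ n) * (u ^ (a + n) * Real.exp (-u)) := by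
  have h := Real.pow_div_factorial_le_exp (x / u) (by positivity) n
  have h2 : Real.exp (-(x / u)) ≤ n.factorial / x ^ n * u ^ n := by
    rw [Real.exp_neg]
    refine (inv_anti₀ (by positivity) h).trans_eq ?_
    rw [div_pow]
    field_simp
  calc K a x u ≤ u ^ a * Real.exp (-u) * (n.factorial / x ^ n * u ^ n) := by
        unfold K; gcongr
    _ = _ := by rw [Real.rpow_add hu, Real.rpow_natCast]; ring

lemma K_meas (a x : ℝ) : Measurable (K a x) := by
  unfold K; fun_prop

lemma K_int (a : ℝ) {x : ℝ} (hx : 0 < x) : IntegrableOn (K a x) (Ioi 0) := by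
  obtain ⟨n, hn⟩ := exists_nat_gt (-a)
  have h := (Real.GammaIntegral_convergent (s := a + n + 1) (by linarith)).const_mul
    (n.factorial / x ^ n)
  refine Integrable.mono' h (K_meas a x).aestronglyMeasurable ?_
  filter_upwards [ae_restrict_mem measurableSet_Ioi] with u hu
  rw [Real.norm_of_nonneg (K_nonneg a x hu)]
  refine (K_le a hx hu n).trans_eq ?_
  rw [add_sub_cancel_right, mul_comm (Real.exp _)]

lemma K_tendsto_zero (a : ℝ) {x : ℝ} (hx : 0 < x) : Tendsto (K a x) (𝓝[>] 0) (𝓝 0) := by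
  obtain ⟨n, hn⟩ := exists_nat_gt (-a)
  have hs : 0 < a + n := by linarith
  have hc : Tendsto (fun u : ℝ => (n.factorial / x ^ n) * (u ^ (a + n) * Real.exp (-u)))
      (𝓝[>] 0) (𝓝 0) := by
    have h1 : ContinuousAt (fun u : ℝ => (n.factorial / x ^ n) * (u ^ (a + n) * Real.exp (-u)))
        0 := by
      have := Real.continuousAt_rpow_const (0 : ℝ) (a + n) (Or.inr hs.le)
      fun_prop
    have h2 := h1.tendsto
    simp only [Real.zero_rpow hs.ne', zero_mul, mul_zero] at h2
    exact h2.mono_left nhdsWithin_le_nhds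
  refine squeeze_zero' ?_ ?_ hc
  · filter_upwards [self_mem_nhdsWithin] with u hu using K_nonneg a x hu
  · filter_upwards [self_mem_nhdsWithin] with u hu using K_le a hx hu n

lemma K_tendsto_atTop (a : ℝ) {x : ℝ} (hx : 0 < x) : Tendsto (K a x) atTop (𝓝 0) := by
  have h := tendsto_rpow_mul_exp_neg_mul_atTop_nhds_zero a 1 one_pos
  refine squeeze_zero' ?_ ?_ h
  · filter_upwards [eventually_gt_atTop 0] with u hu using K_nonneg a x hu
  · filter_upwards [eventually_gt_atTop 0] with u hu
    simpa using K_le a hx hu 0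

lemma K_hasDerivAt_x (a x : ℝ) {u : ℝ} (hu : 0 < u) :
    HasDerivAt (fun x => K a x u) (-K (a - 1) x u) x := by
  have h := (((hasDerivAt_id x).div_const u).neg.exp).const_mul (u ^ a * Real.exp (-u))
  refine h.congr_deriv ?_
  simp only [K, Real.rpow_sub_one hu.ne', id, Pi.neg_apply]
  field_simp

lemma K_hasDerivAt_u (a x : ℝ) {u : ℝ} (hu : 0 < u) :
    HasDerivAt (K a x) (a * K (a - 1) x u - K a x u + x * K (a - 2) x u) u := by
  have h := ((Real.hasDerivAt_rpow_const (p := a) (Or.inl hu.ne')).mul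
    (hasDerivAt_neg u).exp).mul (((hasDerivAt_const u x).div (hasDerivAt_id u) hu.ne').neg.exp)
  refine h.congr_deriv ?_
  have e : u ^ (a - 2) = u ^ a / u ^ 2 := by
    rw [Real.rpow_sub hu]; norm_cast
  simp only [K, Real.rpow_sub_one hu.ne', e, id, Pi.mul_apply, Pi.div_apply, Pi.neg_apply]
  field_simp
  ring

/-- Differentiation under the integral sign; `K (a - 1) (x / 2)` dominates since `K` is
antitone in its second argument. -/
lemma hasDerivAt_integral (a : ℝ) {x : ℝ} (hx : 0 < x) :
    HasDerivAt (fun x => ∫ u in Ioi (0 : ℝ), K a x u) (-∫ u in Ioi (0 : ℝ), K (a - 1) x u) x := by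
  rw [← integral_neg]
  refine (hasDerivAt_integral_of_dominated_loc_of_deriv_le (F := K a)
    (F' := fun x u => -K (a - 1) x u) (bound := K (a - 1) (x / 2))
    (Ioi_mem_nhds (half_lt_self hx)) (.of_forall fun z => (K_meas a z).aestronglyMeasurable)
    (K_int a hx) (K_meas _ x).neg.aestronglyMeasurable ?_ (K_int _ (half_pos hx)) ?_).2
  · filter_upwards [ae_restrict_mem measurableSet_Ioi] with u hu z hz
    have hu' : 0 < u := hu
    have hz' : x / 2 < z := hz
    rw [norm_neg, Real.norm_of_nonneg (K_nonneg _ _ hu)]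
    unfold K
    gcongr
  · filter_upwards [ae_restrict_mem measurableSet_Ioi] with u hu z _
    exact K_hasDerivAt_x a z hu

/-- The fundamental theorem of calculus for `K a x` on `(0, ∞)`, the boundary terms being `0`. -/
lemma integral_relation (a : ℝ) {x : ℝ} (hx : 0 < x) :
    a * (∫ u in Ioi (0 : ℝ), K (a - 1) x u) - (∫ u in Ioi (0 : ℝ), K a x u)
      + x * (∫ u in Ioi (0 : ℝ), K (a - 2) x u) = 0 := by
  have i1 := (K_int (a - 1) hx).const_mul a
  have i2 := K_int a hx
  have i3 := (K_int (a - 2) hx).const_mul x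
  have key : ∫ u in Ioi (0 : ℝ), (a * K (a - 1) x u - K a x u + x * K (a - 2) x u) = 0 - 0 := by
    -- Integration by parts against the constant `1`: unlike the plain improper FTC, it takes the
    -- limit at `0⁺`, not the value `K a x 0`, which is junk.
    have h := integral_Ioi_deriv_mul_eq_sub (a := (0 : ℝ)) (a' := (0 : ℝ)) (b' := (0 : ℝ))
      (u := K a x) (v := fun _ => 1) (v' := fun _ => 0)
      (u' := fun u => a * K (a - 1) x u - K a x u + x * K (a - 2) x u)
      (fun u hu => K_hasDerivAt_u a x hu) (fun u _ => hasDerivAt_const u (1 : ℝ))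
      (((i1.sub i2).add i3).congr (.of_forall fun u => by simp))
      ((K_tendsto_zero a hx).congr fun u => by simp)
      ((K_tendsto_atTop a hx).congr fun u => by simp)
    simpa only [mul_one, mul_zero, add_zero] using h
  have e1 := integral_add (i1.sub i2) i3
  simp only [Pi.sub_apply] at e1
  rw [e1, integral_sub i1 i2, integral_const_mul, integral_const_mul] at key
  simpa using key

end KummerIntegral

open KummerIntegral in
/-- The function y(x) = ∫₀^∞ u^{α−1} e^{−u} e^{−x/u} du is twice differentiable on (0,∞)
and satisfies y + (α−1)y′ − x y″ = 0 there. -/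
theorem kummer_integral_ode (α : ℝ)
    (y : ℝ → ℝ)
    (hy : ∀ x : ℝ, y x = ∫ u in Set.Ioi (0 : ℝ),
      u ^ (α - 1) * Real.exp (-u) * Real.exp (-(x / u))) :
    (∀ x : ℝ, 0 < x → DifferentiableAt ℝ y x ∧ DifferentiableAt ℝ (deriv y) x) ∧
    (∀ x : ℝ, 0 < x → y x + (α - 1) * deriv y x - x * deriv (deriv y) x = 0) := by
  have hy' : y = fun x => ∫ u in Set.Ioi (0 : ℝ), K (α - 1) x u := funext hy
  have d1 : ∀ x : ℝ, 0 < x → HasDerivAt y (-∫ u in Set.Ioi (0 : ℝ), K (α - 1 - 1) x u) x := by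
    intro x hx
    rw [hy']
    exact hasDerivAt_integral _ hx
  have d2 : ∀ x : ℝ, 0 < x →
      HasDerivAt (deriv y) (∫ u in Set.Ioi (0 : ℝ), K (α - 1 - 2) x u) x := by
    intro x hx
    have h := (hasDerivAt_integral (α - 1 - 1) hx).neg
    rw [neg_neg, show α - 1 - 1 - 1 = α - 1 - 2 by ring] at h
    refine h.congr_of_eventuallyEq ?_
    filter_upwards [Ioi_mem_nhds hx] with z hz using (d1 z hz).deriv
  refine ⟨fun x hx => ⟨(d1 x hx).differentiableAt, (d2 x hx).differentiableAt⟩, fun x hx => ?_⟩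
  rw [(d1 x hx).deriv, (d2 x hx).deriv, hy']
  linarith [integral_relation (α - 1) hx]
end

section
/- For all real x > 0, α > 0, β > 0, the symmetry relation (x^α/Γ(α)) · ∫₀^∞ u^{α−1} e^{−ux} (1+u)^{−β} du = (x^β/Γ(β)) · ∫₀^∞ u^{β−1} e^{−ux} (1+u)^{−α} du holds. -/
/-!
Up to the factor `Γ(α) Γ(β)`, both sides equal the double integral over `s, t > 0` of
`s ^ (α - 1) * t ^ (β - 1) * exp (-(s + t + s * t / x))`, which is visibly symmetric under
`(α, s) ↔ (β, t)`. Indeed the substitution `s = u * x` turns `x ^ α` times the left integral into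
`∫ s ^ (α - 1) * exp (-s) * (1 + s / x) ^ (-β)`, and the last factor, multiplied by `Γ(β)`, is the
Gamma integral `∫ t ^ (β - 1) * exp (-((1 + s / x) * t))`; this is `gamma_mul_kummer_integral`.
The exchange of the two integrations is justified because the kernel is dominated by the product
of the two Gamma integrands (`kummerKernel_integrable`).
-/

open MeasureTheory

/-- The kernel whose double integral over `(0, ∞)²` is `Γ(β) x ^ α` times the left integral. -/
noncomputable def kummerKernel (α β x s t : ℝ) : ℝ :=
  Real.exp (-s) * s ^ (α - 1) * (Real.exp (-t) * t ^ (β - 1)) * Real.exp (-(s * t / x))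

lemma kummerKernel_swap (α β x s t : ℝ) : kummerKernel α β x s t = kummerKernel β α x t s := by
  unfold kummerKernel
  rw [mul_comm s t]
  ring

lemma kummerKernel_integrable {α β x : ℝ} (hx : 0 < x) (hα : 0 < α) (hβ : 0 < β) :
    Integrable (Function.uncurry (kummerKernel α β x))
      ((volume.restrict (Set.Ioi 0)).prod (volume.restrict (Set.Ioi 0))) := by
  have h := (Real.GammaIntegral_convergent hα).integrable.mul_prod
    (Real.GammaIntegral_convergent hβ).integrable
  refine h.mono ?_ ?_
  · refine Measurable.aestronglyMeasurable ?_
    unfold Function.uncurry kummerKernel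
    fun_prop
  · rw [Measure.prod_restrict]
    filter_upwards [ae_restrict_mem (measurableSet_Ioi.prod measurableSet_Ioi)] with p hp
    obtain ⟨h1, h2⟩ := hp
    have h1 : 0 < p.1 := h1
    have h2 : 0 < p.2 := h2
    simp only [Function.uncurry, kummerKernel]
    rw [norm_mul]
    refine mul_le_of_le_one_right (norm_nonneg _) ?_
    rw [Real.norm_eq_abs, Real.abs_exp, Real.exp_le_one_iff]
    have : 0 ≤ p.1 * p.2 / x := by positivity
    linarith

lemma gamma_mul_kummer_integral {α β x : ℝ} (hx : 0 < x) (hβ : 0 < β) :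
    Real.Gamma β * (x ^ α *
      ∫ u in Set.Ioi (0 : ℝ), u ^ (α - 1) * Real.exp (-(u * x)) * (1 + u) ^ (-β)) =
    ∫ s in Set.Ioi (0 : ℝ), ∫ t in Set.Ioi (0 : ℝ), kummerKernel α β x s t := by
  have h := integral_comp_mul_right_Ioi
    (fun s => ∫ t in Set.Ioi (0 : ℝ), kummerKernel α β x s t) 0 hx
  rw [zero_mul, smul_eq_mul, eq_inv_mul_iff_mul_eq₀ hx.ne'] at h
  rw [← h, ← integral_const_mul, ← integral_const_mul, ← integral_const_mul]
  refine setIntegral_congr_fun measurableSet_Ioi fun u hu => ?_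
  have hu : 0 < u := hu
  have h1 : 0 < 1 + u := by linarith
  have key : ∫ t in Set.Ioi (0 : ℝ), kummerKernel α β x (u * x) t =
      Real.exp (-(u * x)) * (u * x) ^ (α - 1) * ((1 / (1 + u)) ^ β * Real.Gamma β) := by
    rw [← Real.integral_rpow_mul_exp_neg_mul_Ioi hβ h1, ← integral_const_mul]
    congr 1
    ext t
    have e : Real.exp (-((1 + u) * t)) = Real.exp (-t) * Real.exp (-(u * x * t / x)) := by
      rw [← Real.exp_add]
      congr 1
      field_simp
      ring
    rw [kummerKernel, e]
    ring
  simp only [key]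
  have hp : x ^ α = x * x ^ (α - 1) := by
    rw [Real.rpow_sub_one hx.ne']
    field_simp
  rw [Real.mul_rpow hu.le hx.le, one_div, Real.inv_rpow h1.le, Real.rpow_neg h1.le, hp]
  ring

/-- The symmetry relation
(x^α/Γ(α))·∫₀^∞ u^{α−1} e^{−ux}(1+u)^{−β} du = (x^β/Γ(β))·∫₀^∞ u^{β−1} e^{−ux}(1+u)^{−α} du. -/
theorem kummer_symmetry (α β x : ℝ) (hx : 0 < x) (hα : 0 < α) (hβ : 0 < β) :
    x ^ α / Real.Gamma α *
        ∫ u in Set.Ioi (0 : ℝ), u ^ (α - 1) * Real.exp (-(u * x)) * (1 + u) ^ (-β)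
      = x ^ β / Real.Gamma β *
        ∫ u in Set.Ioi (0 : ℝ), u ^ (β - 1) * Real.exp (-(u * x)) * (1 + u) ^ (-α) := by
  have h1 := gamma_mul_kummer_integral (α := α) hx hβ
  have h2 := gamma_mul_kummer_integral (α := β) hx hα
  have h : ∫ s in Set.Ioi (0 : ℝ), ∫ t in Set.Ioi (0 : ℝ), kummerKernel α β x s t =
      ∫ t in Set.Ioi (0 : ℝ), ∫ s in Set.Ioi (0 : ℝ), kummerKernel β α x t s := by
    rw [integral_integral_swap (kummerKernel_integrable hx hα hβ)]
    simp only [kummerKernel_swap α β x]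
  rw [← h1, ← h2] at h
  have ga := (Real.Gamma_pos_of_pos hα).ne'
  have gb := (Real.Gamma_pos_of_pos hβ).ne'
  rw [div_mul_eq_mul_div, div_mul_eq_mul_div, div_eq_div_iff ga gb]
  linarith
end

section
/- Let x > 0, α > 0, β > 0 be real and let k ≥ 1 be a natural number. Then the error in truncating the (generally divergent) asymptotic series 1 − αβ/x + α(α+1)β(β+1)/(2!x²) − ⋯ after k terms is bounded by the first omitted term: |(1/Γ(α))·∫₀^∞ u^{α−1} e^{−u} (1 + u/x)^{−β} du − ∑_{j=0}^{k−1} (−1)^j (α)_j (β)_j/(j!·x^j)| ≤ (α)_k (β)_k/(k!·x^k). -/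
/-!
The binomial series of `(1 + t)^(-β)` is enveloping on `t ≥ 0`: the remainder `R_k` after `k` terms
has the sign `(-1)^k`. This follows by induction on `k`, since `R_{k+1}` vanishes at `0` and its
derivative is `-β` times the `k`-th remainder for `β + 1` (`binomial_remainder_nonneg`). Integrating
against the density `u^(α-1) e^(-u) / Γ(α)` of the Gamma distribution, whose `j`-th moment is
`(α)_j` (`integral_weight_mul_pow`), the remainders of the asymptotic series alternate in sign as
well (`kummer_remainder_nonneg`). Since two consecutive remainders have opposite signs and differ
by one term of the series, each is at most that term in absolute value.
-/

open MeasureTheory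
open scoped Nat

/-- Termwise differentiation of the truncated binomial series: `k + 1` terms for `β` become
`-β` times `k` terms for `β + 1`. -/
lemma hasDerivAt_binomial_partial (β t : ℝ) (k : ℕ) :
    HasDerivAt (fun t : ℝ => ∑ j ∈ Finset.range (k + 1),
        (-1 : ℝ) ^ j * (ascPochhammer ℝ j).eval β / (j ! : ℝ) * t ^ j)
      (-β * ∑ j ∈ Finset.range k,
        (-1 : ℝ) ^ j * (ascPochhammer ℝ j).eval (β + 1) / (j ! : ℝ) * t ^ j) t := by
  have h : HasDerivAt (fun t : ℝ => ∑ j ∈ Finset.range (k + 1),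
        (-1 : ℝ) ^ j * (ascPochhammer ℝ j).eval β / (j ! : ℝ) * t ^ j)
      (∑ j ∈ Finset.range (k + 1),
        (-1 : ℝ) ^ j * (ascPochhammer ℝ j).eval β / (j ! : ℝ) * (j * t ^ (j - 1))) t :=
    HasDerivAt.fun_sum fun j _ => (hasDerivAt_pow j t).const_mul _
  convert h using 1
  rw [Finset.sum_range_succ', Finset.mul_sum]
  simp only [Nat.cast_zero, zero_mul, mul_zero, add_zero]
  refine Finset.sum_congr rfl fun j _ => ?_
  have hj : (j ! : ℝ) ≠ 0 := by positivity
  have hj' : (j : ℝ) + 1 ≠ 0 := by positivity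
  rw [ascPochhammer_succ_left, Nat.factorial_succ]
  simp only [Polynomial.eval_mul, Polynomial.eval_X, Polynomial.eval_comp, Polynomial.eval_add,
    Polynomial.eval_one, Nat.add_sub_cancel]
  push_cast
  field_simp
  ring

lemma binomial_remainder_nonneg (k : ℕ) : ∀ (β : ℝ), 0 < β → ∀ t : ℝ, 0 ≤ t →
    0 ≤ (-1 : ℝ) ^ k * ((1 + t) ^ (-β) - ∑ j ∈ Finset.range k,
        (-1 : ℝ) ^ j * (ascPochhammer ℝ j).eval β / (j ! : ℝ) * t ^ j) := by
  induction k with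
  | zero =>
    intro β hβ t ht
    simp only [pow_zero, Finset.range_zero, Finset.sum_empty, sub_zero, one_mul]
    positivity
  | succ k ih =>
    intro β hβ t ht
    set F : ℝ → ℝ := fun t => (-1 : ℝ) ^ (k + 1) * ((1 + t) ^ (-β) -
      ∑ j ∈ Finset.range (k + 1),
        (-1 : ℝ) ^ j * (ascPochhammer ℝ j).eval β / (j ! : ℝ) * t ^ j) with hF
    have hd : ∀ s : ℝ, 0 ≤ s → HasDerivAt F (β * ((-1 : ℝ) ^ k * ((1 + s) ^ (-(β + 1)) -
        ∑ j ∈ Finset.range k,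
          (-1 : ℝ) ^ j * (ascPochhammer ℝ j).eval (β + 1) / (j ! : ℝ) * s ^ j))) s := by
      intro s hs
      have h1 : HasDerivAt (fun s : ℝ => (1 + s) ^ (-β)) (1 * (-β) * (1 + s) ^ (-β - 1)) s :=
        ((hasDerivAt_id s).const_add 1).rpow_const (Or.inl (by simp only [id]; positivity))
      refine ((h1.sub (hasDerivAt_binomial_partial β s k)).const_mul
        ((-1 : ℝ) ^ (k + 1))).congr_deriv ?_
      rw [show -(β + 1) = -β - 1 by ring]
      ring
    have hmono : MonotoneOn F (Set.Ici 0) := by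
      refine monotoneOn_of_deriv_nonneg (convex_Ici 0)
        (fun s hs => (hd s hs).continuousAt.continuousWithinAt)
        (fun s hs => ?_) (fun s hs => ?_)
      · rw [interior_Ici] at hs
        exact (hd s (le_of_lt hs)).differentiableAt.differentiableWithinAt
      · rw [interior_Ici] at hs
        rw [(hd s (le_of_lt hs)).deriv]
        exact mul_nonneg hβ.le (ih (β + 1) (by positivity) s (le_of_lt hs))
    have h0 : F 0 = 0 := by
      simp [hF, Finset.sum_range_succ']
    have := hmono (Set.mem_Ici.2 le_rfl) (Set.mem_Ici.2 ht) ht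
    rwa [h0] at this

lemma Gamma_add_nat_eq (α : ℝ) (hα : 0 < α) (j : ℕ) :
    Real.Gamma (α + j) = (ascPochhammer ℝ j).eval α * Real.Gamma α := by
  induction j with
  | zero => simp
  | succ j ih =>
    rw [ascPochhammer_succ_eval, Nat.cast_succ, ← add_assoc,
      Real.Gamma_add_one (by positivity), ih]
    ring

lemma weight_mul_pow_eq (α : ℝ) (j : ℕ) : Set.EqOn
    (fun u : ℝ => Real.exp (-u) * u ^ (α + j - 1))
    (fun u : ℝ => u ^ (α - 1) * Real.exp (-u) * u ^ j) (Set.Ioi 0) := by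
  intro u hu
  simp only
  rw [show α + j - 1 = (α - 1) + j by ring, Real.rpow_add hu, Real.rpow_natCast]
  ring

lemma integrableOn_weight_mul_pow (α : ℝ) (hα : 0 < α) (j : ℕ) :
    IntegrableOn (fun u : ℝ => u ^ (α - 1) * Real.exp (-u) * u ^ j) (Set.Ioi 0) :=
  (Real.GammaIntegral_convergent (s := α + j) (by positivity)).congr_fun
    (weight_mul_pow_eq α j) measurableSet_Ioi

lemma integral_weight_mul_pow (α : ℝ) (hα : 0 < α) (j : ℕ) :
    ∫ u in Set.Ioi (0 : ℝ), u ^ (α - 1) * Real.exp (-u) * u ^ j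
      = (ascPochhammer ℝ j).eval α * Real.Gamma α := by
  rw [← Gamma_add_nat_eq α hα, Real.Gamma_eq_integral (by positivity)]
  exact (setIntegral_congr_fun measurableSet_Ioi (weight_mul_pow_eq α j)).symm

lemma integrableOn_kummer (α β x : ℝ) (hx : 0 < x) (hα : 0 < α) (hβ : 0 < β) :
    IntegrableOn (fun u : ℝ => u ^ (α - 1) * Real.exp (-u) * (1 + u / x) ^ (-β))
      (Set.Ioi 0) := by
  have hw := integrableOn_weight_mul_pow α hα 0
  simp only [pow_zero, mul_one] at hw
  refine Integrable.mono' hw (Measurable.aestronglyMeasurable (by fun_prop)) ?_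
  refine (ae_restrict_mem measurableSet_Ioi).mono fun u hu => ?_
  have hu : 0 < u := hu
  have h1 : (1 + u / x) ^ (-β) ≤ 1 :=
    Real.rpow_le_one_of_one_le_of_nonpos (by linarith [div_pos hu hx]) (by linarith)
  rw [Real.norm_of_nonneg (by positivity)]
  exact mul_le_of_le_one_right (by positivity) h1

/-- The remainder of the asymptotic series after `k` terms has the sign `(-1)^k`. -/
lemma kummer_remainder_nonneg (α β x : ℝ) (hx : 0 < x) (hα : 0 < α) (hβ : 0 < β) (k : ℕ) :
    0 ≤ (-1 : ℝ) ^ k * ((1 / Real.Gamma α) *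
        (∫ u in Set.Ioi (0 : ℝ), u ^ (α - 1) * Real.exp (-u) * (1 + u / x) ^ (-β))
      - ∑ j ∈ Finset.range k,
          (-1 : ℝ) ^ j * (ascPochhammer ℝ j).eval α * (ascPochhammer ℝ j).eval β
            / ((j ! : ℝ) * x ^ j)) := by
  have hΓ : 0 < Real.Gamma α := Real.Gamma_pos_of_pos hα
  set c : ℕ → ℝ := fun j => (-1 : ℝ) ^ j * (ascPochhammer ℝ j).eval β / ((j ! : ℝ) * x ^ j)
    with hc
  have hint : ∀ j ∈ Finset.range k, IntegrableOn
      (fun u : ℝ => c j * (u ^ (α - 1) * Real.exp (-u) * u ^ j)) (Set.Ioi 0) :=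
    fun j _ => (integrableOn_weight_mul_pow α hα j).const_mul _
  have hnn : 0 ≤ ∫ u in Set.Ioi (0 : ℝ), (-1 : ℝ) ^ k *
      (u ^ (α - 1) * Real.exp (-u) * (1 + u / x) ^ (-β) -
        ∑ j ∈ Finset.range k, c j * (u ^ (α - 1) * Real.exp (-u) * u ^ j)) := by
    refine setIntegral_nonneg measurableSet_Ioi fun u hu => ?_
    have hu : 0 < u := hu
    have h := mul_nonneg (show 0 ≤ u ^ (α - 1) * Real.exp (-u) by positivity)
      (binomial_remainder_nonneg k β hβ (u / x) (by positivity))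
    refine h.trans_eq ?_
    rw [mul_left_comm, mul_sub (u ^ (α - 1) * Real.exp (-u)), Finset.mul_sum]
    congr 2
    refine Finset.sum_congr rfl fun j _ => ?_
    simp only [hc, div_pow]
    field_simp
  rw [integral_const_mul, integral_sub (integrableOn_kummer α β x hx hα hβ)
    (integrable_finsetSum _ hint), integral_finsetSum _ hint] at hnn
  simp only [integral_const_mul, integral_weight_mul_pow α hα] at hnn
  have h := mul_nonneg (one_div_pos.2 hΓ).le hnn
  refine h.trans_eq ?_
  rw [mul_left_comm, mul_sub (1 / Real.Gamma α), Finset.mul_sum]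
  congr 2
  refine Finset.sum_congr rfl fun j _ => ?_
  simp only [hc]
  field_simp

/-- The error in truncating the asymptotic series after k terms is bounded by the
first omitted term. -/
theorem kummer_asymptotic_error_bound (α β x : ℝ) (hx : 0 < x) (hα : 0 < α) (hβ : 0 < β)
    (k : ℕ) (hk : 1 ≤ k) :
    |(1 / Real.Gamma α) *
        (∫ u in Set.Ioi (0 : ℝ), u ^ (α - 1) * Real.exp (-u) * (1 + u / x) ^ (-β))
      - ∑ j ∈ Finset.range k,
          (-1 : ℝ) ^ j * (ascPochhammer ℝ j).eval α * (ascPochhammer ℝ j).eval β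
            / ((j ! : ℝ) * x ^ j)|
      ≤ (ascPochhammer ℝ k).eval α * (ascPochhammer ℝ k).eval β / ((k ! : ℝ) * x ^ k) := by
  have h1 := kummer_remainder_nonneg α β x hx hα hβ k
  have h2 := kummer_remainder_nonneg α β x hx hα hβ (k + 1)
  rw [Finset.sum_range_succ, ← sub_sub, pow_succ, mul_assoc ((-1 : ℝ) ^ k) _ _,
    mul_div_assoc] at h2
  rw [mul_div_assoc]
  rcases neg_one_pow_eq_or ℝ k with h | h
  · rw [h] at h1 h2
    rw [abs_le]
    constructor <;> linarith
  · rw [h] at h1 h2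
    rw [abs_le]
    constructor <;> linarith
end

section
/- For every real x ≥ 0, ∫₀^∞ e^{−u²} e^{−x/u²} du = (√π/2) · e^{−2√x}. -/
/-!
For `x > 0` put `a = √x`. Completing the square gives `u² + x/u² = (u - a/u)² + 2a`, so it suffices
to show `∫₀^∞ g = √π/2` for `g u = exp (-(u - a/u)²)`. The map `u ↦ u - a/u` is an increasing
bijection from `(0, ∞)` onto `ℝ`, so the Gaussian integral becomes
`√π = ∫₀^∞ (1 + a/u²) g u du` (`integral_weighted`). The substitution `u ↦ a/u` maps `(0, ∞)` to
itself and preserves `g`, so `∫₀^∞ g u du = ∫₀^∞ (a/u²) g u du` (`integral_eq_inversion`). Thus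
`√π` is twice the integral of `g`.
-/

open MeasureTheory

namespace KummerGaussian

variable {a : ℝ}

lemma hasDerivAt_sub_div (a : ℝ) {u : ℝ} (hu : u ≠ 0) :
    HasDerivAt (fun u : ℝ => u - a / u) (1 + a / u ^ 2) u := by
  have h : HasDerivAt (fun u : ℝ => u - a / u) (1 - a * -(u ^ 2)⁻¹) u :=
    (hasDerivAt_id u).sub ((hasDerivAt_inv hu).const_mul a)
  exact h.congr_deriv (by ring)

lemma injOn_sub_div (ha : 0 < a) : Set.InjOn (fun u : ℝ => u - a / u) (Set.Ioi 0) := by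
  intro u hu v hv h
  have hu : 0 < u := hu
  have hv : 0 < v := hv
  have h : u - a / u = v - a / v := h
  field_simp at h
  have h2 : (u - v) * (u * v + a) = 0 := by linear_combination h
  rcases mul_eq_zero.mp h2 with h3 | h3
  · linarith
  · nlinarith [mul_pos hu hv]

lemma image_sub_div (ha : 0 < a) :
    (fun u : ℝ => u - a / u) '' Set.Ioi 0 = Set.univ := by
  refine Set.eq_univ_of_forall fun w => ?_
  have hs : Real.sqrt (w ^ 2 + 4 * a) ^ 2 = w ^ 2 + 4 * a := Real.sq_sqrt (by positivity)
  have hlt : |w| < Real.sqrt (w ^ 2 + 4 * a) := by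
    rw [← Real.sqrt_sq_eq_abs]
    exact Real.sqrt_lt_sqrt (sq_nonneg w) (by linarith)
  have hpos : 0 < (w + Real.sqrt (w ^ 2 + 4 * a)) / 2 := by linarith [neg_abs_le w]
  -- the positive root of `u² - w u - a = 0`
  refine ⟨(w + Real.sqrt (w ^ 2 + 4 * a)) / 2, hpos, ?_⟩
  generalize hu : (w + Real.sqrt (w ^ 2 + 4 * a)) / 2 = u at hpos
  have hr : Real.sqrt (w ^ 2 + 4 * a) = 2 * u - w := by linarith
  rw [hr] at hs
  show u - a / u = w
  field_simp
  linarith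

lemma integrableOn_weighted (ha : 0 < a) :
    IntegrableOn (fun u : ℝ => (1 + a / u ^ 2) * Real.exp (-(u - a / u) ^ 2)) (Set.Ioi 0) := by
  have h := (integrableOn_image_iff_integrableOn_abs_deriv_smul measurableSet_Ioi
    (fun u hu => (hasDerivAt_sub_div a (ne_of_gt hu)).hasDerivWithinAt) (injOn_sub_div ha)
    (fun w : ℝ => Real.exp (-w ^ 2))).mp (by
      rw [image_sub_div ha, integrableOn_univ]
      simpa using integrable_exp_neg_mul_sq (b := 1) one_pos)
  refine h.congr_fun (fun u _ => ?_) measurableSet_Ioi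
  have : 0 ≤ 1 + a / u ^ 2 := by positivity
  simp only [abs_of_nonneg this, smul_eq_mul]

lemma integral_weighted (ha : 0 < a) :
    ∫ u in Set.Ioi (0 : ℝ), (1 + a / u ^ 2) * Real.exp (-(u - a / u) ^ 2) = Real.sqrt Real.pi := by
  have h := integral_image_eq_integral_abs_deriv_smul measurableSet_Ioi
    (fun u hu => (hasDerivAt_sub_div a (ne_of_gt hu)).hasDerivWithinAt) (injOn_sub_div ha)
    (fun w : ℝ => Real.exp (-w ^ 2))
  rw [image_sub_div ha, setIntegral_univ] at h
  have hg : ∫ w : ℝ, Real.exp (-w ^ 2) = Real.sqrt Real.pi := by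
    simpa using integral_gaussian 1
  rw [← hg, h]
  refine setIntegral_congr_fun measurableSet_Ioi (fun u _ => ?_)
  have : 0 ≤ 1 + a / u ^ 2 := by positivity
  simp only [abs_of_nonneg this, smul_eq_mul]

lemma integrableOn_exp (ha : 0 < a) :
    IntegrableOn (fun u : ℝ => Real.exp (-(u - a / u) ^ 2)) (Set.Ioi 0) := by
  refine (integrableOn_weighted ha).mono' (by fun_prop) (ae_of_all _ fun u => ?_)
  rw [Real.norm_of_nonneg (Real.exp_pos _).le]
  have : 0 ≤ a / u ^ 2 := by positivity
  nlinarith [Real.exp_pos (-(u - a / u) ^ 2)]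

/-- The substitution `u ↦ a / u` is an involution of `(0, ∞)` that only changes the sign of
`u - a / u`. -/
lemma integral_eq_inversion (ha : 0 < a) :
    ∫ u in Set.Ioi (0 : ℝ), Real.exp (-(u - a / u) ^ 2)
      = ∫ u in Set.Ioi (0 : ℝ), a / u ^ 2 * Real.exp (-(u - a / u) ^ 2) := by
  have hd : ∀ u ∈ Set.Ioi (0 : ℝ),
      HasDerivWithinAt (fun u : ℝ => a / u) (-(a / u ^ 2)) (Set.Ioi 0) u := by
    intro u hu
    have h : HasDerivAt (fun u : ℝ => a / u) (a * -(u ^ 2)⁻¹) u :=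
      (hasDerivAt_inv (ne_of_gt hu)).const_mul a
    exact (h.congr_deriv (by ring)).hasDerivWithinAt
  have hinv : ∀ u : ℝ, a / (a / u) = u := fun u => div_div_cancel₀ ha.ne'
  have hi : Set.InjOn (fun u : ℝ => a / u) (Set.Ioi 0) :=
    (Function.LeftInverse.injective (g := fun u : ℝ => a / u) hinv).injOn
  have him : (fun u : ℝ => a / u) '' Set.Ioi 0 = Set.Ioi 0 := by
    ext w
    constructor
    · rintro ⟨u, hu, rfl⟩
      exact div_pos ha hu
    · intro hw
      exact ⟨a / w, div_pos ha hw, hinv w⟩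
  have h := integral_image_eq_integral_abs_deriv_smul measurableSet_Ioi hd hi
    (fun u : ℝ => Real.exp (-(u - a / u) ^ 2))
  rw [him] at h
  rw [h]
  refine setIntegral_congr_fun measurableSet_Ioi (fun u _ => ?_)
  have : 0 ≤ a / u ^ 2 := by positivity
  simp only [abs_neg, abs_of_nonneg this, smul_eq_mul, hinv]
  rw [sub_sq_comm]

lemma integral_exp (ha : 0 < a) :
    ∫ u in Set.Ioi (0 : ℝ), Real.exp (-(u - a / u) ^ 2) = Real.sqrt Real.pi / 2 := by
  have h : ∫ u in Set.Ioi (0 : ℝ), a / u ^ 2 * Real.exp (-(u - a / u) ^ 2)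
      = Real.sqrt Real.pi - ∫ u in Set.Ioi (0 : ℝ), Real.exp (-(u - a / u) ^ 2) := by
    rw [← integral_weighted ha, ← integral_sub (integrableOn_weighted ha) (integrableOn_exp ha)]
    congr 1 with u
    ring
  linarith [integral_eq_inversion ha]

end KummerGaussian

/-- ∫₀^∞ e^{−u²} e^{−x/u²} du = (√π/2)·e^{−2√x}. -/
theorem kummer_gaussian_integral (x : ℝ) (hx : 0 ≤ x) :
    ∫ u in Set.Ioi (0 : ℝ), Real.exp (-u ^ 2) * Real.exp (-(x / u ^ 2))
      = Real.sqrt Real.pi / 2 * Real.exp (-2 * Real.sqrt x) := by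
  rcases hx.eq_or_lt with rfl | hx
  · simpa using integral_gaussian_Ioi 1
  · rw [← KummerGaussian.integral_exp (Real.sqrt_pos.mpr hx), ← integral_mul_const]
    refine setIntegral_congr_fun measurableSet_Ioi (fun u hu => ?_)
    have hu : u ≠ 0 := ne_of_gt hu
    have hs : Real.sqrt x ^ 2 = x := Real.sq_sqrt hx.le
    simp only [← Real.exp_add]
    congr 1
    generalize Real.sqrt x = a at hs
    subst hs
    field_simp
    ring
end

section
/- For every real x > 0 and every real α > −1/2, ∫₀^∞ u^{α−1} e^{−u} e^{−x/u} du = (2^{2α+1} √π · x^α · e^{−2√x} / Γ(α + 1/2)) · ∫₀^∞ (u + u²)^{α−1/2} e^{−4u√x} du. -/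
open MeasureTheory

/-!
With `s = √x`, the factor `e^{-2s} e^{-4us} = e^{-2s(1+2u)}` is a mixture of Gaussians: for `b > 0`,
`√π e^{-2b} = b ∫₀^∞ w^{-3/2} e^{-w - b²/w} dw` (`lintegral_inverse_gaussian`), applied with
`b = s(1+2u)`. Since `(1+2u)² = 1 + 4(u+u²)` and `1+2u` is the derivative of `u+u²`, exchanging
the integrals turns the `u`-integral into the Gamma integral
`∫₀^∞ r^{α-1/2} e^{-4xr/w} dr = Γ(α+1/2) (w/4x)^{α+1/2}`, and what remains is
`∫₀^∞ w^{α-1} e^{-w-x/w} dw` times a constant.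

The mixture formula comes from `∫ e^{-y²} dy = √π` under `y = √w - b/√w`, whose derivative has two
terms with equal contributions, exchanged by the reflection `w ↦ b²/w`.

All integrands are nonnegative, so everything is done with lower Lebesgue integrals, where
Tonelli's theorem needs no integrability.
-/

namespace KummerTransform

open Set Real

lemma lintegral_exp_neg_sq : ∫⁻ y : ℝ, ENNReal.ofReal (exp (-y ^ 2)) = ENNReal.ofReal √π := by
  have h := integral_gaussian 1
  have hi := integrable_exp_neg_mul_sq (b := 1) one_pos
  rw [div_one] at h
  rw [← h, ofReal_integral_eq_lintegral_ofReal hi (ae_of_all _ fun _ => (exp_pos _).le)]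
  simp

lemma lintegral_gamma {a k : ℝ} (ha : 0 < a) (hk : 0 < k) :
    ∫⁻ r in Ioi (0 : ℝ), ENNReal.ofReal (r ^ (a - 1) * exp (-(k * r)))
      = ENNReal.ofReal ((1 / k) ^ a * Gamma a) := by
  have h := integral_rpow_mul_exp_neg_mul_Ioi ha hk
  have hpos : 0 < (1 / k) ^ a * Gamma a :=
    mul_pos (rpow_pos_of_pos (by positivity) _) (Gamma_pos_of_pos ha)
  -- a nonzero Bochner integral forces integrability
  have hi : IntegrableOn (fun r : ℝ => r ^ (a - 1) * exp (-(k * r))) (Ioi 0) := by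
    by_contra hc
    rw [integral_undef hc] at h
    exact hpos.ne h
  rw [← h, ofReal_integral_eq_lintegral_ofReal hi]
  filter_upwards [ae_restrict_mem measurableSet_Ioi] with r hr
  exact mul_nonneg (rpow_nonneg (le_of_lt hr) _) (exp_pos _).le

lemma injOn_sqrt_sub {b : ℝ} (hb : 0 < b) : InjOn (fun w : ℝ => √w - b / √w) (Ioi 0) := by
  intro u hu v hv h
  have hu' := sqrt_pos.2 hu
  have hv' := sqrt_pos.2 hv
  have h1 : (√u - √v) * (√u * √v + b) = 0 := by
    simp only at h
    field_simp at h
    linear_combination h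
  have h2 : √u = √v := by
    rcases mul_eq_zero.1 h1 with h | h
    · linarith
    · have : 0 < √u * √v + b := by positivity
      linarith
  exact (sqrt_inj (le_of_lt hu) (le_of_lt hv)).1 h2

lemma image_sqrt_sub {b : ℝ} (hb : 0 < b) :
    (fun w : ℝ => √w - b / √w) '' Ioi 0 = univ := by
  refine eq_univ_of_forall fun y => ?_
  have hlt : |y| < √(y ^ 2 + 4 * b) := by
    rw [← sqrt_sq_eq_abs]
    exact sqrt_lt_sqrt (sq_nonneg _) (by linarith)
  have hsq : √(y ^ 2 + 4 * b) ^ 2 = y ^ 2 + 4 * b := sq_sqrt (by positivity)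
  have hv : 0 < (y + √(y ^ 2 + 4 * b)) / 2 := by linarith [neg_abs_le y]
  -- the positive root of `v² - y v - b = 0`
  refine ⟨((y + √(y ^ 2 + 4 * b)) / 2) ^ 2, by simpa using pow_pos hv 2, ?_⟩
  simp only [sqrt_sq hv.le]
  set v := (y + √(y ^ 2 + 4 * b)) / 2 with hvd
  have hr : √(y ^ 2 + 4 * b) = 2 * v - y := by rw [hvd]; ring
  rw [hr] at hsq
  field_simp
  linarith

/-- The invariance of the inverse Gaussian weight under `w ↦ b²/w`. -/
lemma lintegral_reflect {b : ℝ} (hb : 0 < b) :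
    ∫⁻ w in Ioi (0 : ℝ), ENNReal.ofReal (1 / √w * exp (-w - b ^ 2 / w))
      = ∫⁻ w in Ioi (0 : ℝ), ENNReal.ofReal (b / (w * √w) * exp (-w - b ^ 2 / w)) := by
  have himg : (fun w : ℝ => b ^ 2 / w) '' Ioi 0 = Ioi 0 := by
    ext y
    constructor
    · rintro ⟨w, hw, rfl⟩
      have hw' : (0 : ℝ) < w := hw
      exact mem_Ioi.2 (by positivity)
    · intro hy
      have hy' : (0 : ℝ) < y := hy
      exact ⟨b ^ 2 / y, div_pos (by positivity) hy', by simp only; field_simp⟩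
  have hinj : InjOn (fun w : ℝ => b ^ 2 / w) (Ioi 0) := by
    intro u hu v hv h
    have hu' : (0 : ℝ) < u := hu
    have hv' : (0 : ℝ) < v := hv
    simp only at h
    field_simp at h
    exact h.symm
  have hder : ∀ w ∈ Ioi (0 : ℝ),
      HasDerivWithinAt (fun w : ℝ => b ^ 2 / w) (-(b ^ 2 / w ^ 2)) (Ioi 0) w := by
    intro w hw
    have hw' : w ≠ 0 := ne_of_gt hw
    have := ((hasDerivAt_const w (b ^ 2)).div (hasDerivAt_id w) hw').hasDerivWithinAt (s := Ioi 0)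
    exact this.congr_deriv (by simp [neg_div])
  conv_lhs => rw [← himg]
  rw [lintegral_image_eq_lintegral_abs_deriv_mul measurableSet_Ioi hder hinj]
  refine setLIntegral_congr_fun measurableSet_Ioi fun w hw => ?_
  have hw' : (0 : ℝ) < w := hw
  have hs := sqrt_pos.2 hw'
  have hsq : √w ^ 2 = w := sq_sqrt hw'.le
  rw [← ENNReal.ofReal_mul (abs_nonneg _), abs_neg, abs_of_pos (by positivity),
    sqrt_div (by positivity), sqrt_sq hb.le, ← mul_assoc]
  congr 2
  · field_simp
    linear_combination hsq
  · congr 1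
    field_simp
    ring

/-- The normalisation of the inverse Gaussian distribution. -/
lemma lintegral_inverse_gaussian {b : ℝ} (hb : 0 < b) :
    ∫⁻ w in Ioi (0 : ℝ), ENNReal.ofReal (b / (w * √w) * exp (-w - b ^ 2 / w))
      = ENNReal.ofReal (√π * exp (-(2 * b))) := by
  have hder : ∀ w ∈ Ioi (0 : ℝ), HasDerivWithinAt (fun w : ℝ => √w - b / √w)
      (1 / 2 * (1 / √w) + 1 / 2 * (b / (w * √w))) (Ioi 0) w := by
    intro w hw
    have hw' : (0 : ℝ) < w := hw
    have hs := sqrt_pos.2 hw'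
    have hsq : √w ^ 2 = w := sq_sqrt hw'.le
    have h1 := hasDerivAt_sqrt hw'.ne'
    have := (h1.sub ((h1.inv hs.ne').const_mul b)).hasDerivWithinAt (s := Ioi 0)
    refine (this.congr_deriv ?_)
    rw [hsq]
    field_simp
    ring
  have h := lintegral_exp_neg_sq
  rw [← setLIntegral_univ, ← image_sqrt_sub hb,
    lintegral_image_eq_lintegral_abs_deriv_mul measurableSet_Ioi hder (injOn_sqrt_sub hb)] at h
  have h2 : ∫⁻ w in Ioi (0 : ℝ), ENNReal.ofReal |1 / 2 * (1 / √w) + 1 / 2 * (b / (w * √w))|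
        * ENNReal.ofReal (exp (-(√w - b / √w) ^ 2))
      = ∫⁻ w in Ioi (0 : ℝ), ENNReal.ofReal (exp (2 * b) / 2)
          * (ENNReal.ofReal (1 / √w * exp (-w - b ^ 2 / w))
            + ENNReal.ofReal (b / (w * √w) * exp (-w - b ^ 2 / w))) := by
    refine setLIntegral_congr_fun measurableSet_Ioi fun w hw => ?_
    have hw' : (0 : ℝ) < w := hw
    have hs := sqrt_pos.2 hw'
    have hsq : √w ^ 2 = w := sq_sqrt hw'.le
    have he : exp (-(√w - b / √w) ^ 2) = exp (2 * b) * exp (-w - b ^ 2 / w) := by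
      rw [← exp_add]
      congr 1
      rw [sub_sq, div_pow, hsq]
      field_simp
      ring
    rw [← ENNReal.ofReal_add (by positivity) (by positivity), ← ENNReal.ofReal_mul (by positivity),
      ← ENNReal.ofReal_mul (by positivity), abs_of_pos (by positivity), he]
    congr 1
    ring
  rw [h2, lintegral_const_mul _ (by fun_prop), lintegral_add_left (by fun_prop),
    lintegral_reflect hb, ← two_mul, ← mul_assoc] at h
  have h3 : ENNReal.ofReal (exp (2 * b) / 2) * 2 = ENNReal.ofReal (exp (2 * b)) := by
    rw [← ENNReal.ofReal_ofNat 2, ← ENNReal.ofReal_mul (by positivity)]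
    congr 1
    ring
  rw [h3] at h
  rw [mul_comm √π, ENNReal.ofReal_mul (exp_pos _).le, ← h, ← mul_assoc,
    ← ENNReal.ofReal_mul (exp_pos _).le, ← exp_add]
  simp

/-- The substitution `r = u + u²` in a Gamma integral. -/
lemma lintegral_gamma_quadratic {a k : ℝ} (ha : 0 < a) (hk : 0 < k) :
    ∫⁻ u in Ioi (0 : ℝ),
        ENNReal.ofReal ((1 + 2 * u) * ((u + u ^ 2) ^ (a - 1) * exp (-(k * (u + u ^ 2)))))
      = ENNReal.ofReal ((1 / k) ^ a * Gamma a) := by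
  have himg : (fun u : ℝ => u + u ^ 2) '' Ioi 0 = Ioi 0 := by
    ext y
    constructor
    · rintro ⟨u, hu, rfl⟩
      have hu' : (0 : ℝ) < u := hu
      exact mem_Ioi.2 (by positivity)
    · intro hy
      have hy' : (0 : ℝ) < y := hy
      have h1 : 1 < √(1 + 4 * y) := by
        rw [lt_sqrt zero_le_one]
        linarith
      have hsq : √(1 + 4 * y) ^ 2 = 1 + 4 * y := sq_sqrt (by positivity)
      exact ⟨(√(1 + 4 * y) - 1) / 2, mem_Ioi.2 (by linarith), by
        simp only
        linear_combination hsq / 4⟩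
  have hinj : InjOn (fun u : ℝ => u + u ^ 2) (Ioi 0) := by
    intro u hu v hv h
    have hu' : (0 : ℝ) < u := hu
    have hv' : (0 : ℝ) < v := hv
    have h1 : (u - v) * (1 + u + v) = 0 := by
      simp only at h
      linear_combination h
    rcases mul_eq_zero.1 h1 with h | h <;> linarith
  have hder : ∀ u ∈ Ioi (0 : ℝ),
      HasDerivWithinAt (fun u : ℝ => u + u ^ 2) (1 + 2 * u) (Ioi 0) u := by
    intro u _
    have := ((hasDerivAt_id u).add (hasDerivAt_pow 2 u)).hasDerivWithinAt (s := Ioi 0)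
    exact this.congr_deriv (by simp)
  rw [← lintegral_gamma ha hk]
  conv_rhs => rw [← himg]
  rw [lintegral_image_eq_lintegral_abs_deriv_mul measurableSet_Ioi hder hinj]
  refine setLIntegral_congr_fun measurableSet_Ioi fun u hu => ?_
  have hu' : (0 : ℝ) < u := hu
  rw [← ENNReal.ofReal_mul (abs_nonneg _), abs_of_pos (by positivity)]

/-- The transform with `a = α + 1/2` and the constants not yet simplified. -/
lemma lintegral_transform {a x : ℝ} (hx : 0 < x) (ha : 0 < a) :
    ENNReal.ofReal (√π * exp (-2 * √x)) * ∫⁻ u in Ioi (0 : ℝ),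
        ENNReal.ofReal ((u + u ^ 2) ^ (a - 1) * exp (-(4 * u * √x)))
      = ENNReal.ofReal (√x * (1 / (4 * x)) ^ a * Gamma a) * ∫⁻ w in Ioi (0 : ℝ),
        ENNReal.ofReal (w ^ (a - 1 / 2 - 1) * exp (-w) * exp (-(x / w))) := by
  have hsx := sqrt_pos.2 hx
  have hsq : √x ^ 2 = x := sq_sqrt hx.le
  have hG := Gamma_pos_of_pos ha
  let F : ℝ → ℝ → ENNReal := fun u w =>
    ENNReal.ofReal (√x / (w * √w) * exp (-w - x / w)) *
      ENNReal.ofReal ((1 + 2 * u) * ((u + u ^ 2) ^ (a - 1) * exp (-(4 * x / w * (u + u ^ 2)))))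
  have hF : Measurable (Function.uncurry F) := by
    unfold F Function.uncurry
    fun_prop
  calc
    _ = ∫⁻ u in Ioi (0 : ℝ), ∫⁻ w in Ioi (0 : ℝ), F u w := by
      rw [← lintegral_const_mul _ (by fun_prop)]
      refine setLIntegral_congr_fun measurableSet_Ioi fun u hu => ?_
      have hu' : (0 : ℝ) < u := hu
      have hq : 0 < (u + u ^ 2) ^ (a - 1) := rpow_pos_of_pos (by positivity) _
      have hb : 0 < √x * (1 + 2 * u) := by positivity
      have h1 : √π * exp (-2 * √x) * ((u + u ^ 2) ^ (a - 1) * exp (-(4 * u * √x)))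
          = (u + u ^ 2) ^ (a - 1) * (√π * exp (-(2 * (√x * (1 + 2 * u))))) := by
        have : exp (-(2 * (√x * (1 + 2 * u)))) = exp (-2 * √x) * exp (-(4 * u * √x)) := by
          rw [← exp_add]
          congr 1
          ring
        rw [this]
        ring
      rw [← ENNReal.ofReal_mul (by positivity), h1, ENNReal.ofReal_mul hq.le,
        ← lintegral_inverse_gaussian hb, ← lintegral_const_mul _ (by fun_prop)]
      refine setLIntegral_congr_fun measurableSet_Ioi fun w hw => ?_
      have hw' : (0 : ℝ) < w := hw
      have hsw := sqrt_pos.2 hw'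
      have he : exp (-w - (√x * (1 + 2 * u)) ^ 2 / w)
          = exp (-w - x / w) * exp (-(4 * x / w * (u + u ^ 2))) := by
        rw [← exp_add, mul_pow, hsq]
        congr 1
        field_simp
        ring
      simp only [F]
      rw [← ENNReal.ofReal_mul hq.le, ← ENNReal.ofReal_mul (by positivity), he]
      congr 1
      ring
    _ = ∫⁻ w in Ioi (0 : ℝ), ∫⁻ u in Ioi (0 : ℝ), F u w :=
      lintegral_lintegral_swap hF.aemeasurable
    _ = _ := by
      rw [← lintegral_const_mul _ (by fun_prop)]
      refine setLIntegral_congr_fun measurableSet_Ioi fun w hw => ?_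
      have hw' : (0 : ℝ) < w := hw
      have hsw := sqrt_pos.2 hw'
      simp only [F]
      rw [lintegral_const_mul _ (by fun_prop), lintegral_gamma_quadratic ha (by positivity),
        ← ENNReal.ofReal_mul (by positivity), ← ENNReal.ofReal_mul (by positivity)]
      congr 1
      have h1 : 1 / (4 * x / w) = 1 / (4 * x) * w := by field_simp
      have h2 : w ^ (a - 1 / 2 - 1) = w ^ a / (w * √w) := by
        rw [rpow_sub hw', rpow_sub hw', rpow_one, sqrt_eq_rpow]
        field_simp
      have h3 : exp (-w - x / w) = exp (-w) * exp (-(x / w)) := by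
        rw [← exp_add]
        rfl
      rw [h1, mul_rpow (by positivity) hw'.le, h2, h3]
      ring

end KummerTransform

/-- ∫₀^∞ u^{α−1} e^{−u} e^{−x/u} du
      = (2^{2α+1}√π·x^α·e^{−2√x}/Γ(α+1/2))·∫₀^∞ (u+u²)^{α−1/2} e^{−4u√x} du. -/
theorem kummer_integral_transform (α x : ℝ) (hx : 0 < x) (hα : -(1 / 2 : ℝ) < α) :
    ∫ u in Set.Ioi (0 : ℝ), u ^ (α - 1) * Real.exp (-u) * Real.exp (-(x / u))
      = (2 : ℝ) ^ (2 * α + 1) * Real.sqrt Real.pi * x ^ α * Real.exp (-2 * Real.sqrt x)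
          / Real.Gamma (α + 1 / 2)
        * ∫ u in Set.Ioi (0 : ℝ), (u + u ^ 2) ^ (α - 1 / 2)
            * Real.exp (-(4 * u * Real.sqrt x)) := by
  have ha : 0 < α + 1 / 2 := by linarith
  have hsx := Real.sqrt_pos.2 hx
  have hG := Real.Gamma_pos_of_pos ha
  have h := congrArg ENNReal.toReal (KummerTransform.lintegral_transform hx ha)
  have e1 : α + 1 / 2 - 1 = α - 1 / 2 := by ring
  have e2 : α + 1 / 2 - 1 / 2 - 1 = α - 1 := by ring
  rw [e1, e2, ENNReal.toReal_mul, ENNReal.toReal_mul, ENNReal.toReal_ofReal (by positivity),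
    ENNReal.toReal_ofReal (by positivity), ← integral_eq_lintegral_of_nonneg_ae,
    ← integral_eq_lintegral_of_nonneg_ae] at h
  · have h4 : Real.sqrt x * (1 / (4 * x)) ^ (α + 1 / 2) * ((2 : ℝ) ^ (2 * α + 1) * x ^ α) = 1 := by
      have h5 : (2 : ℝ) ^ (2 * α + 1) = 4 ^ (α + 1 / 2) := by
        rw [show (4 : ℝ) = 2 ^ (2 : ℝ) by norm_num, ← Real.rpow_mul (by norm_num)]
        congr 1
        ring
      have h6 : Real.sqrt x * x ^ α = x ^ (α + 1 / 2) := by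
        rw [Real.rpow_add hx, Real.sqrt_eq_rpow]
        ring
      calc _ = (1 / (4 * x)) ^ (α + 1 / 2) * (2 ^ (2 * α + 1) * (Real.sqrt x * x ^ α)) := by ring
        _ = 1 := by
          rw [h5, h6, ← Real.mul_rpow (by norm_num) hx.le,
            ← Real.mul_rpow (by positivity) (by positivity), one_div_mul_cancel (by positivity),
            Real.one_rpow]
    set I := ∫ u in Set.Ioi (0 : ℝ), u ^ (α - 1) * Real.exp (-u) * Real.exp (-(x / u))
    rw [div_mul_eq_mul_div, eq_div_iff hG.ne']
    linear_combination (-(2 ^ (2 * α + 1) * x ^ α)) * h - (I * Real.Gamma (α + 1 / 2)) * h4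
  · filter_upwards [ae_restrict_mem measurableSet_Ioi] with u hu
    have hu' : (0 : ℝ) < u := hu
    exact mul_nonneg (mul_nonneg (Real.rpow_nonneg hu'.le _) (Real.exp_pos _).le)
      (Real.exp_pos _).le
  · exact Measurable.aestronglyMeasurable (by fun_prop)
  · filter_upwards [ae_restrict_mem measurableSet_Ioi] with u hu
    have hu' : (0 : ℝ) < u := hu
    exact mul_nonneg (Real.rpow_nonneg (by positivity) _) (Real.exp_pos _).le
  · exact Measurable.aestronglyMeasurable (by fun_prop)
end

section
/- Let α > 2 and β be real, and define z(x) = ∫₀^{π/2} cos^{α−1}(v) · cos((x/2)·tan v + βv) dv for x > 0. Then z is twice differentiable on (0,∞) and satisfies the differential equation (x + 2β)·z(x) + 4(α − 1)·z′(x) − 4x·z″(x) = 0 for every x > 0. -/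
open MeasureTheory intervalIntegral

/-!
Differentiating under the integral sign multiplies the weight by `tan v / 2` and shifts the phase
`(x/2) tan v + β v` by `π / 2`; two such steps express `z'` and `z''` as integrals. Domination is
free here, since the derivative of the integrand is bounded by its weight, uniformly in `x`. So it
suffices that `cos^{α-1} v`, `cos^{α-1} v tan v` and `cos^{α-1} v tan² v` are integrable. The first
two are bounded by `1`, and the third by `cos^{α-3} v sin v`, which is the nonnegative derivative of
the bounded function `-cos^{α-2} v / (α-2)`; this is where `α > 2` is used.

As `1 + tan² = sec²`, the left-hand side of the equation is then the integral of
`2 d/dv [cos^{α-1} v sin ((x/2) tan v + β v)]`. The bracket vanishes at `0` and tends to `0` at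
`π/2`, so the integral is zero.
-/

lemma measurable_real_tan : Measurable Real.tan := by
  have h : Real.tan = fun v => Real.sin v / Real.cos v := funext Real.tan_eq_sin_div_cos
  rw [h]; fun_prop

lemma measurable_cos_phase (β y d : ℝ) :
    Measurable fun v => Real.cos (y / 2 * Real.tan v + β * v + d) := by
  have htan := measurable_real_tan
  fun_prop

lemma intervalIntegrable_mul_cos_phase (β c : ℝ) {w : ℝ → ℝ}
    (hw : IntervalIntegrable w volume 0 (Real.pi / 2)) (x : ℝ) :
    IntervalIntegrable (fun v => w v * Real.cos (x / 2 * Real.tan v + β * v + c)) volume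
      0 (Real.pi / 2) := by
  refine hw.mono_fun (hw.def'.aestronglyMeasurable.mul
    (measurable_cos_phase β x c).aestronglyMeasurable) (Filter.Eventually.of_forall fun v => ?_)
  beta_reduce
  rw [norm_mul]
  exact mul_le_of_le_one_right (norm_nonneg _) (Real.abs_cos_le_one _)

/-- Differentiation under the integral sign, with the phase `c` left free so that the lemma can be
iterated: `-sin y` is written as `cos (y + π / 2)`. -/
lemma hasDerivAt_weighted_integral (β c : ℝ) (w : ℝ → ℝ)
    (hw : IntervalIntegrable w volume 0 (Real.pi / 2))
    (hwt : IntervalIntegrable (fun v => w v * (Real.tan v / 2)) volume 0 (Real.pi / 2))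
    (x : ℝ) :
    HasDerivAt (fun y : ℝ => ∫ v in (0 : ℝ)..(Real.pi / 2),
        w v * Real.cos (y / 2 * Real.tan v + β * v + c))
      (∫ v in (0 : ℝ)..(Real.pi / 2),
        (w v * (Real.tan v / 2)) * Real.cos (x / 2 * Real.tan v + β * v + (c + Real.pi / 2))) x := by
  refine (intervalIntegral.hasDerivAt_integral_of_dominated_loc_of_deriv_le
    (F := fun y v => w v * Real.cos (y / 2 * Real.tan v + β * v + c))
    (F' := fun y v => (w v * (Real.tan v / 2)) *
      Real.cos (y / 2 * Real.tan v + β * v + (c + Real.pi / 2)))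
    (bound := fun v => ‖w v * (Real.tan v / 2)‖) (s := Set.univ) Filter.univ_mem
    (Filter.Eventually.of_forall fun y => hw.def'.aestronglyMeasurable.mul
      (measurable_cos_phase β y c).aestronglyMeasurable)
    (intervalIntegrable_mul_cos_phase β c hw x)
    (hwt.def'.aestronglyMeasurable.mul (measurable_cos_phase β x _).aestronglyMeasurable)
    (Filter.Eventually.of_forall fun v _ y _ => ?_) hwt.norm
    (Filter.Eventually.of_forall fun v _ y _ => ?_)).2
  · rw [norm_mul]
    exact mul_le_of_le_one_right (norm_nonneg _) (Real.abs_cos_le_one _)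
  · have h1 : HasDerivAt (fun y : ℝ => y / 2 * Real.tan v + β * v + c) (1 / 2 * Real.tan v) y :=
      ((((hasDerivAt_id y).div_const 2).mul_const _).add_const _).add_const _
    refine ((h1.cos).const_mul (w v)).congr_deriv ?_
    rw [← add_assoc, Real.cos_add_pi_div_two]
    ring

lemma cos_pos_of_mem_Ioo {v : ℝ} (hv : v ∈ Set.Ioo 0 (Real.pi / 2)) : 0 < Real.cos v :=
  Real.cos_pos_of_mem_Ioo ⟨by linarith [hv.1, Real.pi_pos], hv.2⟩

/-- The integrand is the nonnegative derivative of `-cos^{α-2} v / (α-2)`, which is continuous on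
`[0, π/2]`. -/
lemma intervalIntegrable_cos_rpow_mul_sin {α : ℝ} (hα : 2 < α) :
    IntervalIntegrable (fun v => Real.cos v ^ (α - 3) * Real.sin v) volume 0 (Real.pi / 2) := by
  have hpi := Real.pi_pos
  rw [intervalIntegrable_iff_integrableOn_Ioc_of_le (by positivity)]
  refine integrableOn_deriv_of_nonneg (g := fun v => -(Real.cos v ^ (α - 2)) / (α - 2)) ?_ ?_ ?_
  · exact ((Real.continuous_cos.rpow_const fun _ => Or.inr (by linarith)).neg.div_const _).continuousOn
  · intro v hv
    have hc := cos_pos_of_mem_Ioo hv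
    have h := (((Real.hasDerivAt_cos v).rpow_const (p := α - 2) (Or.inl hc.ne')).neg).div_const (α - 2)
    refine h.congr_deriv ?_
    have : α - 2 ≠ 0 := by linarith
    rw [show α - 2 - 1 = α - 3 by ring]
    field_simp
  · intro v hv
    have hc := cos_pos_of_mem_Ioo hv
    have hs := Real.sin_pos_of_pos_of_lt_pi hv.1 (by linarith [hv.2])
    positivity

/-- The three weights occurring in `z`, `z'` and `z''` are integrable. -/
lemma intervalIntegrable_weights {α : ℝ} (hα : 2 < α) :
    IntervalIntegrable (fun v => Real.cos v ^ (α - 1)) volume 0 (Real.pi / 2) ∧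
    IntervalIntegrable (fun v => Real.cos v ^ (α - 1) * (Real.tan v / 2)) volume
      0 (Real.pi / 2) ∧
    IntervalIntegrable (fun v => Real.cos v ^ (α - 1) * (Real.tan v / 2) * (Real.tan v / 2)) volume
      0 (Real.pi / 2) := by
  have hpi := Real.pi_pos
  have htan := measurable_real_tan
  have hpow : ∀ {s : ℝ}, 0 ≤ s →
      IntervalIntegrable (fun v => Real.cos v ^ s) volume 0 (Real.pi / 2) := fun hs =>
    (Real.continuous_cos.rpow_const fun _ => Or.inr hs).intervalIntegrable _ _
  -- The endpoint `π / 2`, where `tan` takes a junk value, is a null set.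
  have hae : ∀ {p : ℝ → Prop}, (∀ v ∈ Set.Ioo 0 (Real.pi / 2), p v) →
      ∀ᵐ v ∂volume.restrict (Set.uIoc 0 (Real.pi / 2)), p v := by
    intro p hp
    rw [Set.uIoc_of_le (by positivity), ← restrict_Ioo_eq_restrict_Ioc]
    exact (ae_restrict_iff' measurableSet_Ioo).2 (Filter.Eventually.of_forall hp)
  refine ⟨hpow (by linarith), ?_, ?_⟩
  · refine (hpow (s := α - 2) (by linarith)).mono_fun ?_ (hae fun v hv => ?_)
    · exact Measurable.aestronglyMeasurable (by fun_prop)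
    · have hc := cos_pos_of_mem_Ioo hv
      have hs := Real.sin_pos_of_pos_of_lt_pi hv.1 (by linarith [hv.2])
      have e : Real.cos v ^ (α - 1) = Real.cos v ^ (α - 2) * Real.cos v := by
        rw [← Real.rpow_add_one hc.ne']; ring_nf
      have e2 : Real.cos v ^ (α - 1) * (Real.tan v / 2)
          = Real.cos v ^ (α - 2) * (Real.sin v / 2) := by
        rw [e, Real.tan_eq_sin_div_cos]; field_simp
      beta_reduce
      rw [e2, norm_mul]
      refine mul_le_of_le_one_right (norm_nonneg _) ?_
      rw [Real.norm_of_nonneg (by positivity)]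
      linarith [Real.sin_le_one v]
  · refine (intervalIntegrable_cos_rpow_mul_sin hα).mono_fun ?_ (hae fun v hv => ?_)
    · exact Measurable.aestronglyMeasurable (by fun_prop)
    · have hc := cos_pos_of_mem_Ioo hv
      have hs := Real.sin_pos_of_pos_of_lt_pi hv.1 (by linarith [hv.2])
      have e : Real.cos v ^ (α - 1) = Real.cos v ^ (α - 3) * Real.cos v * Real.cos v := by
        rw [← Real.rpow_add_one hc.ne', ← Real.rpow_add_one hc.ne']; ring_nf
      have e2 : Real.cos v ^ (α - 1) * (Real.tan v / 2) * (Real.tan v / 2)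
          = Real.cos v ^ (α - 3) * Real.sin v * (Real.sin v / 4) := by
        rw [e, Real.tan_eq_sin_div_cos]; field_simp; norm_num
      beta_reduce
      rw [e2, norm_mul]
      refine mul_le_of_le_one_right (norm_nonneg _) ?_
      rw [Real.norm_of_nonneg (by positivity)]
      linarith [Real.sin_le_one v]

/-- The derivative of `2 cos^{α-1} v sin ((x/2) tan v + β v)`, in the form in which the equation
produces it. -/
lemma hasDerivAt_boundary_term (α β x : ℝ) {v : ℝ} (hc : 0 < Real.cos v) :
    HasDerivAt (fun v => 2 * (Real.cos v ^ (α - 1) * Real.sin (x / 2 * Real.tan v + β * v)))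
      ((x + 2 * β) * (Real.cos v ^ (α - 1) * Real.cos (x / 2 * Real.tan v + β * v + 0))
        + 4 * (α - 1) * (Real.cos v ^ (α - 1) * (Real.tan v / 2) *
          Real.cos (x / 2 * Real.tan v + β * v + (0 + Real.pi / 2)))
        - 4 * x * (Real.cos v ^ (α - 1) * (Real.tan v / 2) * (Real.tan v / 2) *
          Real.cos (x / 2 * Real.tan v + β * v + (0 + Real.pi / 2 + Real.pi / 2)))) v := by
  have h1 : HasDerivAt (fun v => x / 2 * Real.tan v + β * v)
      (x / 2 * (1 / Real.cos v ^ 2) + β * 1) v :=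
    ((Real.hasDerivAt_tan hc.ne').const_mul _).add ((hasDerivAt_id v).const_mul β)
  have h2 := (((Real.hasDerivAt_cos v).rpow_const (p := α - 1) (Or.inl hc.ne')).mul
    h1.sin).const_mul 2
  refine h2.congr_deriv ?_
  have e : Real.cos v ^ (α - 1) = Real.cos v ^ (α - 1 - 1) * Real.cos v := by
    rw [← Real.rpow_add_one hc.ne']; ring_nf
  rw [show 0 + Real.pi / 2 + Real.pi / 2 = Real.pi by ring, zero_add, add_zero,
    Real.cos_add_pi_div_two, Real.cos_add_pi, e]
  have hsec : 1 / Real.cos v ^ 2 = 1 + Real.tan v ^ 2 := by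
    rw [Real.tan_eq_sin_div_cos]; field_simp; linarith [Real.sin_sq_add_cos_sq v]
  have hsin : Real.sin v = Real.tan v * Real.cos v := (Real.tan_mul_cos hc.ne').symm
  rw [hsec, hsin]
  ring

/-- z(x) = ∫₀^{π/2} cos^{α−1}v · cos((x/2)tan v + βv) dv is twice differentiable on (0,∞)
and satisfies (x+2β)z + 4(α−1)z′ − 4x z″ = 0 there. -/
theorem kummer_cosine_integral_ode (α β : ℝ) (hα : 2 < α)
    (z : ℝ → ℝ)
    (hz : ∀ x : ℝ, z x = ∫ v in (0 : ℝ)..(Real.pi / 2),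
      Real.cos v ^ (α - 1) * Real.cos (x / 2 * Real.tan v + β * v)) :
    (∀ x : ℝ, 0 < x → DifferentiableAt ℝ z x ∧ DifferentiableAt ℝ (deriv z) x) ∧
    (∀ x : ℝ, 0 < x →
      (x + 2 * β) * z x + 4 * (α - 1) * deriv z x - 4 * x * deriv (deriv z) x = 0) := by
  have hpi := Real.pi_pos
  obtain ⟨i0, i1, i2⟩ := intervalIntegrable_weights hα
  have D0 := hasDerivAt_weighted_integral β 0 _ i0 i1
  have D1 := hasDerivAt_weighted_integral β (0 + Real.pi / 2) _ i1 i2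
  have hz0 : z = fun y : ℝ => ∫ v in (0 : ℝ)..(Real.pi / 2),
      Real.cos v ^ (α - 1) * Real.cos (y / 2 * Real.tan v + β * v + 0) := by
    funext y; simp only [hz, add_zero]
  have hz1 := funext fun y => (D0 y).deriv
  rw [← hz0] at hz1
  have hz2 := fun y => (D1 y).deriv
  rw [← hz1] at hz2
  refine ⟨fun x _ => ⟨?_, ?_⟩, fun x _ => ?_⟩
  · rw [hz0]; exact (D0 x).differentiableAt
  · rw [hz1]; exact (D1 x).differentiableAt
  have j0 := intervalIntegrable_mul_cos_phase β 0 i0 x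
  have j1 := intervalIntegrable_mul_cos_phase β (0 + Real.pi / 2) i1 x
  have j2 := intervalIntegrable_mul_cos_phase β (0 + Real.pi / 2 + Real.pi / 2) i2 x
  have hlim0 : Filter.Tendsto
      (fun v => 2 * (Real.cos v ^ (α - 1) * Real.sin (x / 2 * Real.tan v + β * v)))
      (nhdsWithin 0 (Set.Ioi 0)) (nhds 0) := by
    have h := (hasDerivAt_boundary_term α β x (v := 0) (by simp)).continuousAt.tendsto
    simp only [Real.tan_zero, mul_zero, add_zero, Real.sin_zero] at h
    exact h.mono_left nhdsWithin_le_nhds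
  have hlim1 : Filter.Tendsto
      (fun v => 2 * (Real.cos v ^ (α - 1) * Real.sin (x / 2 * Real.tan v + β * v)))
      (nhdsWithin (Real.pi / 2) (Set.Iio (Real.pi / 2))) (nhds 0) := by
    have hc : Continuous fun v => 2 * |Real.cos v ^ (α - 1)| :=
      continuous_const.mul
        (Real.continuous_cos.rpow_const fun _ => Or.inr (by linarith)).abs
    have h := hc.tendsto (Real.pi / 2)
    rw [Real.cos_pi_div_two, Real.zero_rpow (by linarith), abs_zero, mul_zero] at h
    refine squeeze_zero_norm (fun v => ?_) (h.mono_left nhdsWithin_le_nhds)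
    rw [Real.norm_eq_abs, abs_mul, abs_mul, abs_two]
    gcongr
    exact mul_le_of_le_one_right (abs_nonneg _) (Real.abs_sin_le_one _)
  have key := integral_eq_sub_of_hasDerivAt_of_tendsto (by positivity)
    (fun v hv => hasDerivAt_boundary_term α β x (cos_pos_of_mem_Ioo hv))
    (((j0.const_mul _).add (j1.const_mul _)).sub (j2.const_mul _)) hlim0 hlim1
  rw [integral_sub ((j0.const_mul _).add (j1.const_mul _)) (j2.const_mul _),
    integral_add (j0.const_mul _) (j1.const_mul _), intervalIntegral.integral_const_mul,
    intervalIntegral.integral_const_mul, intervalIntegral.integral_const_mul, sub_zero] at key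
  rw [hz2, hz1, hz0]
  exact key
end
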